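/- arXiv:2107.09638 — 2 statements merged into one kernel-verified Lean document; each statement's English description precedes it below -/
import Mathlib

section
/- For every nonempty closed subset σ of the complex plane there exist a complex Hilbert space H, a dense subspace D of H, and a linear operator A : D → H with closed graph (i.e., if x_k ∈ D, x_k → x in H and A x_k → y in H, then x ∈ D and A x = y) which is unbounded (there is no constant C ≥ 0 with ‖A x‖ ≤ C‖x‖ for all x ∈ D), such that for every λ ∈ ℂ the following equivalence holds: λ ∉ σ if and only if there exists a bounded linear operator R : H → H with R(H) ⊆ D, (A − λI)(R y) = y for all y ∈ H, and R((A − λI) x) = x for all x ∈ D. -/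
/-- The Hilbert space of square-summable complex families. -/
abbrev HSp (ι : Type) : Type := lp (fun _ : ι => ℂ) 2

lemma memlp_two_iff {ι : Type} (f : ι → ℂ) :
    Memℓp f 2 ↔ Summable (fun i => ‖f i‖ ^ 2) := by
  rw [memℓp_gen_iff (by norm_num)]
  simp

lemma norm_sq_HSp {ι : Type} (f : HSp ι) : ‖f‖ ^ 2 = ∑' i, ‖f i‖ ^ 2 := by
  have := lp.norm_rpow_eq_tsum (p := 2) (by norm_num) f
  simpa using this

/-- Bounded weighted permutation operators. -/
lemma exists_weighted {ι : Type} (e : Equiv.Perm ι) (b : ι → ℂ) (C : ℝ) (hC : 0 ≤ C)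
    (hb : ∀ i, ‖b i‖ ≤ C) :
    ∃ T : HSp ι →L[ℂ] HSp ι, (∀ f i, T f (e i) = b i * f i) ∧ ‖T‖ ≤ C := by
  have key : ∀ (f : HSp ι) (i : ι), ‖b i * f i‖ ^ 2 ≤ C ^ 2 * ‖f i‖ ^ 2 := by
    intro f i
    rw [norm_mul, mul_pow]
    gcongr
    exact hb i
  have hsum : ∀ f : HSp ι, Summable (fun i => ‖f i‖ ^ 2) := fun f =>
    (memlp_two_iff _).1 (lp.memℓp f)
  have hs : ∀ f : HSp ι, Summable (fun i => ‖b i * f i‖ ^ 2) := fun f =>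
    Summable.of_nonneg_of_le (fun i => by positivity) (key f) ((hsum f).mul_left _)
  have hmem : ∀ f : HSp ι, Memℓp (fun i => b (e.symm i) * f (e.symm i)) 2 := fun f =>
    (memlp_two_iff _).2 ((e.symm.summable_iff (f := fun i => ‖b i * f i‖ ^ 2)).2 (hs f))
  let L : HSp ι →ₗ[ℂ] HSp ι :=
    { toFun := fun f => ⟨fun i => b (e.symm i) * f (e.symm i), hmem f⟩
      map_add' := by
        intro f g
        ext i
        simp [mul_add]
        rfl
      map_smul' := by
        intro c f
        ext i
        simp [mul_left_comm] }
  have hL : ∀ f i, L f i = b (e.symm i) * f (e.symm i) := fun f i => rfl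
  have hn : ∀ f, ‖L f‖ ≤ C * ‖f‖ := by
    intro f
    apply le_of_sq_le_sq _ (by positivity)
    rw [mul_pow, norm_sq_HSp, norm_sq_HSp, ← tsum_mul_left]
    simp only [hL]
    rw [e.symm.tsum_eq (fun i => ‖b i * f i‖ ^ 2)]
    exact (hs f).tsum_le_tsum (key f) ((hsum f).mul_left _)
  refine ⟨L.mkContinuous C hn, ?_, L.mkContinuous_norm_le hC hn⟩
  intro f i
  have := hL f (e i)
  simpa using this

/-- A weighted permutation operator which is conjugate (by a bounded invertible diagonal) to
a strict contraction, subtracted from the identity, is invertible. -/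
lemma isUnit_one_sub_weighted {ι : Type} (e : Equiv.Perm ι) (q d : ι → ℂ) (C r : ℝ)
    (hC : 0 ≤ C) (hr : 0 ≤ r) (hr1 : r < 1)
    (hd0 : ∀ i, d i ≠ 0) (hd : ∀ i, ‖d i‖ ≤ C) (hd' : ∀ i, ‖(d i)⁻¹‖ ≤ C)
    (hq : ∀ i, ‖q i * d (e i) / d i‖ ≤ r)
    (Q : HSp ι →L[ℂ] HSp ι) (hQ : ∀ f i, Q f (e i) = q i * f i) :
    IsUnit (1 - Q) := by
  obtain ⟨S, hS, hSn⟩ := exists_weighted e (fun i => q i * d (e i) / d i) r hr hq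
  obtain ⟨T, hT, -⟩ := exists_weighted (Equiv.refl ι) d C hC hd
  obtain ⟨T', hT', -⟩ := exists_weighted (Equiv.refl ι) (fun i => (d i)⁻¹) C hC hd'
  simp only [Equiv.refl_apply] at hT hT'
  have h1 : T * T' = 1 := by
    ext f i
    simp [hT, hT', hd0]
  have h2 : T' * T = 1 := by
    ext f i
    simp [hT, hT', hd0]
  have h3 : 1 - Q = T' * (1 - S) * T := by
    rw [mul_sub, sub_mul, mul_one, h2]
    congr 1
    ext f i
    obtain ⟨j, rfl⟩ := e.surjective i
    have := hd0 j
    have := hd0 (e j)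
    simp only [mul_apply_eq_comp, hQ, hT', hS, hT]
    field_simp
  rw [h3]
  have uT : IsUnit T := ⟨⟨T, T', h1, h2⟩, rfl⟩
  have uT' : IsUnit T' := ⟨⟨T', T, h2, h1⟩, rfl⟩
  exact (uT'.mul (isUnit_one_sub_of_norm_lt_one (hSn.trans_lt hr1))).mul uT

/-- Maximal domain of the formal operator `f ↦ (i ↦ a i * f (e i))`. -/
def domW {ι : Type} (e : Equiv.Perm ι) (a : ι → ℂ) : Submodule ℂ (HSp ι) where
  carrier := {f | Memℓp (fun i => a i * f (e i)) 2}
  add_mem' := by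
    intro f g hf hg
    have := Memℓp.add hf hg
    simp only [Set.mem_ofPred_eq]
    convert this using 1
    ext i
    simp [mul_add]
  zero_mem' := by
    simp only [Set.mem_ofPred_eq]
    convert (zero_memℓp : Memℓp (0 : ι → ℂ) 2) using 1
    ext i
    simp
  smul_mem' := by
    intro c f hf
    have := Memℓp.const_smul hf c
    simp only [Set.mem_ofPred_eq]
    convert this using 1
    ext i
    simp [mul_left_comm]

lemma mem_domW {ι : Type} (e : Equiv.Perm ι) (a : ι → ℂ) (f : HSp ι) :
    f ∈ domW e a ↔ Memℓp (fun i => a i * f (e i)) 2 := Iff.rfl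

/-- The maximal operator. -/
def opW {ι : Type} (e : Equiv.Perm ι) (a : ι → ℂ) : domW e a →ₗ[ℂ] HSp ι where
  toFun f := ⟨fun i => a i * (f : HSp ι) (e i), f.2⟩
  map_add' := by
    intro f g
    ext i
    simp [mul_add]
    rfl
  map_smul' := by
    intro c f
    ext i
    simp [mul_left_comm]

lemma opW_apply {ι : Type} (e : Equiv.Perm ι) (a : ι → ℂ) (f : domW e a) (i : ι) :
    opW e a f i = a i * (f : HSp ι) (e i) := rfl

lemma domW_of {ι : Type} (e : Equiv.Perm ι) (a : ι → ℂ) (x y : HSp ι)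
    (h : ∀ i, a i * x (e i) = y i) : ∃ hx : x ∈ domW e a, opW e a ⟨x, hx⟩ = y := by
  have hx : x ∈ domW e a := by
    rw [mem_domW]
    simp only [h]
    exact lp.memℓp y
  refine ⟨hx, ?_⟩
  ext i
  rw [opW_apply]
  exact h i

lemma single_op {ι : Type} [DecidableEq ι] (e : Equiv.Perm ι) (a : ι → ℂ) (j : ι) (c : ℂ) :
    ∃ hx : (lp.single 2 (e j) c : HSp ι) ∈ domW e a,
      opW e a ⟨_, hx⟩ = lp.single 2 j (a j * c) := by
  apply domW_of
  intro i
  by_cases h : i = j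
  · subst h
    simp
  · have : e i ≠ e j := fun h' => h (e.injective h')
    simp [Pi.single_eq_of_ne h, Pi.single_eq_of_ne this]

lemma dense_domW {ι : Type} (e : Equiv.Perm ι) (a : ι → ℂ) :
    Dense (domW e a : Set (HSp ι)) := by
  classical
  intro f
  have h := lp.hasSum_single (p := 2) (by norm_num) f
  refine mem_closure_of_tendsto h (Filter.Eventually.of_forall fun s => ?_)
  refine Submodule.sum_mem _ fun i _ => ?_
  obtain ⟨j, rfl⟩ := e.surjective i
  exact (single_op e a j _).1

lemma tendsto_coord {ι : Type} (x : ℕ → HSp ι) (y : HSp ι)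
    (h : Filter.Tendsto x Filter.atTop (nhds y)) (i : ι) :
    Filter.Tendsto (fun k => x k i) Filter.atTop (nhds (y i)) := by
  rw [tendsto_iff_norm_sub_tendsto_zero] at h ⊢
  refine squeeze_zero (fun _ => norm_nonneg _) (fun k => ?_) h
  exact lp.norm_apply_le_norm (by norm_num) (x k - y) i

lemma closed_opW {ι : Type} (e : Equiv.Perm ι) (a : ι → ℂ) (xk : ℕ → domW e a) (x y : HSp ι)
    (hx : Filter.Tendsto (fun k => (xk k : HSp ι)) Filter.atTop (nhds x))
    (hy : Filter.Tendsto (fun k => opW e a (xk k)) Filter.atTop (nhds y)) :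
    ∃ hx : x ∈ domW e a, opW e a ⟨x, hx⟩ = y := by
  apply domW_of
  intro i
  have h1 := (tendsto_coord _ _ hx (e i)).const_mul (a i)
  have h2 := tendsto_coord _ _ hy i
  exact tendsto_nhds_unique h1 h2

/-- The permutation: identity on `σ`, shift on `ℤ`. -/
def theE (σ : Set ℂ) : Equiv.Perm (σ ⊕ ℤ) := Equiv.sumCongr (Equiv.refl σ) (Equiv.addRight 1)

/-- The weights. -/
def theA (σ : Set ℂ) : σ ⊕ ℤ → ℂ
  | Sum.inl s => s
  | Sum.inr n => ((1 + |n| : ℤ) : ℂ)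

lemma theA_inr_ne (σ : Set ℂ) (n : ℤ) : theA σ (Sum.inr n) ≠ 0 := by
  simp only [theA]
  have : (0 : ℤ) < 1 + |n| := by positivity
  exact_mod_cast this.ne'

lemma norm_theA_inr (σ : Set ℂ) (n : ℤ) : ‖theA σ (Sum.inr n)‖ = 1 + |(n : ℝ)| := by
  simp only [theA]
  rw [Complex.norm_intCast]
  push_cast
  rw [abs_of_nonneg (by positivity)]

/-- weights of `Q`. -/
noncomputable def theQ (σ : Set ℂ) (lam : ℂ) : σ ⊕ ℤ → ℂ
  | Sum.inl _ => 0
  | Sum.inr n => lam / theA σ (Sum.inr n)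

/-- weights of `P`. -/
noncomputable def theP (σ : Set ℂ) (lam : ℂ) : σ ⊕ ℤ → ℂ
  | Sum.inl s => 1 / ((s : ℂ) - lam)
  | Sum.inr n => 1 / theA σ (Sum.inr n)

/-- The conjugating diagonal. -/
noncomputable def theD (σ : Set ℂ) (c : ℝ) (N : ℕ) : σ ⊕ ℤ → ℂ
  | Sum.inl _ => 1
  | Sum.inr n => ((c ^ (min (n + N) (2 * N)).toNat : ℝ) : ℂ)

lemma exists_Q (σ : Set ℂ) (lam : ℂ) : ∃ Q : HSp (σ ⊕ ℤ) →L[ℂ] HSp (σ ⊕ ℤ),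
    (∀ f i, Q f (theE σ i) = theQ σ lam i * f i) ∧ IsUnit (1 - Q) := by
  obtain ⟨Q, hQ, -⟩ := exists_weighted (theE σ) (theQ σ lam) ‖lam‖ (norm_nonneg _) (by
    rintro (s | n)
    · simp [theQ]
    · simp only [theQ]
      rw [norm_div, norm_theA_inr]
      exact div_le_self (norm_nonneg _) (by linarith [abs_nonneg (n : ℝ)]))
  refine ⟨Q, hQ, ?_⟩
  obtain ⟨N, hN⟩ := exists_nat_ge (2 * ‖lam‖)
  set c : ℝ := 1 / (2 * (‖lam‖ + 1)) with hc
  have hl := norm_nonneg lam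
  have hc0 : 0 < c := by positivity
  have hc1 : c ≤ 1 := by
    rw [hc, div_le_one (by positivity)]
    linarith
  have hlc : ‖lam‖ * c ≤ 1 / 2 := by
    rw [hc, mul_one_div, div_le_div_iff₀ (by positivity) (by positivity)]
    linarith
  have hcinv : 1 ≤ c⁻¹ := (one_le_inv₀ hc0).2 hc1
  have hC1 : 1 ≤ c⁻¹ ^ (2 * N) := one_le_pow₀ hcinv
  refine isUnit_one_sub_weighted (theE σ) (theQ σ lam) (theD σ c N) (c⁻¹ ^ (2 * N)) (1 / 2)
    (by positivity) (by norm_num) (by norm_num) ?_ ?_ ?_ ?_ Q hQ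
  · rintro (s | n)
    · simp [theD]
    · simp only [theD]
      have : c ^ (min (n + N) (2 * N)).toNat ≠ 0 := by positivity
      exact_mod_cast this
  · rintro (s | n)
    · simpa [theD] using hC1
    · simp only [theD]
      rw [Complex.norm_real, Real.norm_of_nonneg (by positivity)]
      exact (pow_le_one₀ hc0.le hc1).trans hC1
  · rintro (s | n)
    · simpa [theD] using hC1
    · simp only [theD]
      rw [norm_inv, Complex.norm_real, Real.norm_of_nonneg (by positivity), ← inv_pow]
      exact pow_le_pow_right₀ hcinv (by omega)
  · rintro (s | n)
    · simp [theQ]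
    · have he : theE σ (Sum.inr n) = Sum.inr (n + 1) := rfl
      rw [he]
      simp only [theQ, theD]
      rw [norm_div, norm_mul, norm_div, norm_theA_inr, Complex.norm_real, Complex.norm_real,
        Real.norm_of_nonneg (by positivity), Real.norm_of_nonneg (by positivity)]
      have hden : 0 < 1 + |(n : ℝ)| := by positivity
      by_cases hn : -(N : ℤ) ≤ n ∧ n < N
      · have : (min (n + 1 + N) (2 * N)).toNat = (min (n + N) (2 * N)).toNat + 1 := by omega
        rw [this, pow_succ, mul_div_assoc, mul_div_cancel_left₀ _ (by positivity)]
        rw [div_mul_eq_mul_div, div_le_iff₀ hden]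
        nlinarith [abs_nonneg (n : ℝ)]
      · have : (min (n + 1 + N) (2 * N)).toNat = (min (n + N) (2 * N)).toNat := by omega
        rw [this, mul_div_assoc, div_self (by positivity), mul_one, div_le_iff₀ hden]
        have h1 : (N : ℤ) ≤ |n| := by
          rw [le_abs]
          omega
        have h2 : (N : ℝ) ≤ |(n : ℝ)| := by exact_mod_cast h1
        linarith

lemma exists_P (σ : Set ℂ) (hcl : IsClosed σ) (lam : ℂ) (hlam : lam ∉ σ) :
    ∃ P : HSp (σ ⊕ ℤ) →L[ℂ] HSp (σ ⊕ ℤ),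
    (∀ f i, P f (theE σ i) = theP σ lam i * f i) := by
  obtain ⟨ε, hε, hball⟩ := Metric.isOpen_iff.1 hcl.isOpen_compl lam hlam
  obtain ⟨P, hP, -⟩ := exists_weighted (theE σ) (theP σ lam) (max (1 / ε) 1) (by positivity) (by
    rintro (s | n)
    · refine le_trans ?_ (le_max_left _ _)
      simp only [theP]
      rw [norm_div, norm_one]
      apply one_div_le_one_div_of_le hε
      by_contra! h
      exact hball (by rw [Metric.mem_ball, dist_eq_norm]; exact h) s.2
    · refine le_trans ?_ (le_max_right _ _)
      simp only [theP]
      rw [norm_div, norm_one, norm_theA_inr]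
      exact div_le_self zero_le_one (by linarith [abs_nonneg (n : ℝ)]))
  exact ⟨P, hP⟩

lemma coord_iff (σ : Set ℂ) (lam : ℂ) (hlam : lam ∉ σ) (i : σ ⊕ ℤ) (f g : σ ⊕ ℤ → ℂ) :
    f (theE σ i) - theQ σ lam i * f i = theP σ lam i * g i ↔
      theA σ i * f (theE σ i) - lam * f i = g i := by
  rcases i with s | n
  · have he : theE σ (Sum.inl s) = Sum.inl s := rfl
    have : (s : ℂ) - lam ≠ 0 := by
      intro h
      rw [sub_eq_zero] at h
      exact hlam (h ▸ s.2)
    rw [he]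
    simp only [theQ, theP, theA]
    rw [← sub_mul, zero_mul, sub_zero, one_div_mul_eq_div, eq_div_iff this, mul_comm]
  · have := theA_inr_ne σ n
    simp only [theQ, theP]
    rw [← mul_right_inj' this]
    field_simp

/-- For every nonempty closed subset `σ` of `ℂ` there exist a complex Hilbert space `H`,
a dense subspace `D` of `H`, and an unbounded closed linear operator `A : D → H`
whose spectrum is exactly `σ`. -/
theorem exists_unbounded_closed_operator_with_spectrum
    (σ : Set ℂ) (hσ : σ.Nonempty) (hcl : IsClosed σ) :
    ∃ (H : Type) (_ : NormedAddCommGroup H) (_ : InnerProductSpace ℂ H) (_ : CompleteSpace H)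
      (D : Submodule ℂ H) (A : D →ₗ[ℂ] H),
      Dense (D : Set H) ∧
      -- closed graph
      (∀ (xk : ℕ → D) (x y : H),
        Filter.Tendsto (fun k => (xk k : H)) Filter.atTop (nhds x) →
        Filter.Tendsto (fun k => A (xk k)) Filter.atTop (nhds y) →
        ∃ hx : x ∈ D, A ⟨x, hx⟩ = y) ∧
      -- unbounded
      (¬ ∃ C : ℝ, 0 ≤ C ∧ ∀ x : D, ‖A x‖ ≤ C * ‖(x : H)‖) ∧
      -- the spectrum of A is σ
      (∀ lam : ℂ, lam ∉ σ ↔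
        ∃ (R : H →L[ℂ] H) (hR : ∀ y : H, R y ∈ D),
          (∀ y : H, A ⟨R y, hR y⟩ - lam • R y = y) ∧
          (∀ x : D, R (A x - lam • (x : H)) = x)) := by
  classical
  refine ⟨HSp (σ ⊕ ℤ), inferInstance, inferInstance, inferInstance, domW (theE σ) (theA σ),
    opW (theE σ) (theA σ), dense_domW _ _, closed_opW _ _, ?_, ?_⟩
  · rintro ⟨C, -, hC⟩
    obtain ⟨n, hn⟩ := exists_nat_ge C
    obtain ⟨hx, hA⟩ := single_op (theE σ) (theA σ) (Sum.inr (n : ℤ)) 1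
    have h := hC ⟨_, hx⟩
    rw [hA, lp.norm_single (by norm_num), lp.norm_single (by norm_num), mul_one,
      norm_theA_inr, norm_one, mul_one] at h
    have h2 : (n : ℝ) ≤ |((n : ℤ) : ℝ)| := by
      push_cast
      exact le_abs_self _
    linarith
  · intro lam
    constructor
    · intro hlam
      obtain ⟨P, hP⟩ := exists_P σ hcl lam hlam
      obtain ⟨Q, hQ, u, hu⟩ := exists_Q σ lam
      have key : ∀ f g : HSp (σ ⊕ ℤ), (1 - Q) f = P g ↔
          ∀ i, theA σ i * f (theE σ i) - lam * f i = g i := by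
        intro f g
        have h1 : (1 - Q) f = P g ↔ ∀ i, f (theE σ i) - theQ σ lam i * f i = theP σ lam i * g i := by
          constructor
          · intro h i
            rw [← hQ, ← hP, ← h]
            rfl
          · intro h
            ext i
            obtain ⟨j, rfl⟩ := (theE σ).surjective i
            rw [hP, ← h, ← hQ]
            rfl
        rw [h1]
        exact forall_congr' fun i => coord_iff σ lam hlam i f g
      set U : HSp (σ ⊕ ℤ) →L[ℂ] HSp (σ ⊕ ℤ) := ↑u⁻¹ with hU
      have hU1 : (1 - Q) * U = 1 := by rw [← hu, hU, Units.mul_inv]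
      have hU2 : U * (1 - Q) = 1 := by rw [← hu, hU, Units.inv_mul]
      have hsol : ∀ g i, theA σ i * (U * P) g (theE σ i) - lam * (U * P) g i = g i := by
        intro g
        rw [← key]
        exact DFunLike.congr_fun hU1 (P g)
      have hdom : ∀ g, ∃ hx : (U * P) g ∈ domW (theE σ) (theA σ),
          opW (theE σ) (theA σ) ⟨(U * P) g, hx⟩ = g + lam • (U * P) g := by
        intro g
        apply domW_of
        intro i
        have := hsol g i
        rw [sub_eq_iff_eq_add] at this
        exact this
      refine ⟨U * P, fun g => (hdom g).1, fun g => ?_, fun x => ?_⟩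
      · rw [(hdom g).2, add_sub_cancel_right]
      · have h := (key (x : HSp (σ ⊕ ℤ))
          (opW (theE σ) (theA σ) x - lam • (x : HSp (σ ⊕ ℤ)))).2 (fun i => rfl)
        rw [mul_apply_eq_comp, ← h]
        exact DFunLike.congr_fun hU2 (x : HSp (σ ⊕ ℤ))
    · rintro ⟨R, hR, -, h2⟩ hlam
      obtain ⟨hx, hA⟩ := single_op (theE σ) (theA σ) (Sum.inl ⟨lam, hlam⟩) 1
      have h := h2 ⟨_, hx⟩
      rw [hA] at h
      have h0 : (lp.single 2 (Sum.inl ⟨lam, hlam⟩) (theA σ (Sum.inl ⟨lam, hlam⟩) * 1) :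
          HSp (σ ⊕ ℤ)) - lam • (lp.single 2 (theE σ (Sum.inl ⟨lam, hlam⟩)) 1 : HSp (σ ⊕ ℤ)) = 0 := by
        rw [← lp.single_smul, sub_eq_zero]
        rfl
      dsimp only at h
      rw [h0, map_zero] at h
      have h3 := congrArg norm h
      rw [norm_zero, lp.norm_single (by norm_num), norm_one] at h3
      exact zero_ne_one h3
end

section
/- For every nonempty compact subset K of the complex plane there exist a complex Hilbert space H, a dense subspace D of H, and a linear operator A : D → H with closed graph which is unbounded (no constant C ≥ 0 satisfies ‖A x‖ ≤ C‖x‖ for all x ∈ D), such that for every λ ∈ ℂ: λ ∉ K if and only if there exists a bounded linear operator R : H → H with R(H) ⊆ D, (A − λI)(R y) = y for all y ∈ H, and R((A − λI) x) = x for all x ∈ D. -/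
/-- Weighted composition operators on `ℓ²(ι)`. -/
theorem exists_weighted_comp {ι : Type} (σ : ι → ι) (hσ : Function.Injective σ) (c : ι → ℂ)
    (C : ℝ) (hC : 0 ≤ C) (hc : ∀ i, ‖c i‖ ≤ C) :
    ∃ T : lp (fun _ : ι => ℂ) 2 →L[ℂ] lp (fun _ : ι => ℂ) 2,
      ‖T‖ ≤ C ∧ ∀ x i, T x i = c i * x (σ i) := by
  classical
  have h2 : (0 : ℝ) < (2 : ENNReal).toReal := by norm_num
  have key : ∀ (x : lp (fun _ : ι => ℂ) 2) (s : Finset ι),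
      ∑ i ∈ s, ‖c i * x (σ i)‖ ^ (2 : ENNReal).toReal
        ≤ (C * ‖x‖) ^ (2 : ENNReal).toReal := by
    intro x s
    calc ∑ i ∈ s, ‖c i * x (σ i)‖ ^ (2 : ENNReal).toReal
        ≤ ∑ i ∈ s, C ^ (2 : ENNReal).toReal * ‖x (σ i)‖ ^ (2 : ENNReal).toReal := by
          refine Finset.sum_le_sum fun i _ => ?_
          rw [← Real.mul_rpow hC (norm_nonneg _), norm_mul]
          gcongr
          exact hc i
      _ = C ^ (2 : ENNReal).toReal * ∑ j ∈ s.image σ, ‖x j‖ ^ (2 : ENNReal).toReal := by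
          rw [Finset.sum_image (fun a _ b _ h => hσ h), Finset.mul_sum]
      _ ≤ C ^ (2 : ENNReal).toReal * ‖x‖ ^ (2 : ENNReal).toReal := by
          gcongr
          exact lp.sum_rpow_le_norm_rpow h2 x _
      _ = _ := by rw [Real.mul_rpow hC (norm_nonneg _)]
  let L : lp (fun _ : ι => ℂ) 2 →ₗ[ℂ] lp (fun _ : ι => ℂ) 2 :=
    { toFun := fun x => ⟨fun i => c i * x (σ i), memℓp_gen' (key x)⟩
      map_add' := by
        intro x y
        ext i
        exact mul_add (c i) (x (σ i)) (y (σ i))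
      map_smul' := by
        intro a x
        ext i
        simp [mul_left_comm] }
  have hL : ∀ x, ‖L x‖ ≤ C * ‖x‖ := fun x =>
    lp.norm_le_of_forall_sum_le h2 (by positivity) (key x)
  exact ⟨L.mkContinuous C hL, L.mkContinuous_norm_le hC hL, fun x i => rfl⟩

theorem sum_natAbs_ge (j : ℕ) : ∀ n : ℤ, j ^ 2 ≤ ∑ l ∈ Finset.range (2 * j), (n - l).natAbs := by
  induction j with
  | zero => simp
  | succ j ih =>
    intro n
    have h := ih (n - 1)
    rw [show 2 * (j + 1) = (2 * j + 1) + 1 by ring, Finset.sum_range_succ, Finset.sum_range_succ']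
    have h3 : ∑ k ∈ Finset.range (2 * j), (n - ((k + 1 : ℕ) : ℤ)).natAbs
        = ∑ l ∈ Finset.range (2 * j), (n - 1 - l).natAbs := by
      refine Finset.sum_congr rfl fun k _ => ?_
      congr 1
      push_cast
      ring
    rw [h3]
    have h4 : 2 * j + 1 ≤ (n - ((0 : ℕ) : ℤ)).natAbs + (n - ((2 * j + 1 : ℕ) : ℤ)).natAbs := by
      omega
    nlinarith

theorem isUnit_one_sub_of_pow {R : Type} [NormedRing R] [CompleteSpace R] (a : R) (m : ℕ)
    (h : ‖a ^ m‖ < 1) : IsUnit (1 - a) := by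
  have h1 := isUnit_one_sub_of_norm_lt_one h
  rw [← mul_neg_geom_sum] at h1
  refine ((Commute.isUnit_mul_iff ?_).1 h1).1
  rw [Commute, SemiconjBy, mul_neg_geom_sum, geom_sum_mul_neg]

theorem abstract_part (K : Set ℂ) (H : Type) [NormedAddCommGroup H] [InnerProductSpace ℂ H]
    [CompleteSpace H] (S : H →L[ℂ] H) (hinj : Function.Injective S) (hd : DenseRange S)
    (hb : ¬ ∃ C : ℝ, ∀ u, ‖u‖ ≤ C * ‖S u‖) (μ : ℂ)
    (hS : ∀ lam : ℂ, lam ∉ K ↔ IsUnit (1 - (lam - μ) • S)) :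
    ∃ (D : Submodule ℂ H) (A : D →ₗ[ℂ] H),
      Dense (D : Set H) ∧
      (∀ (xk : ℕ → D) (x y : H),
        Filter.Tendsto (fun k => (xk k : H)) Filter.atTop (nhds x) →
        Filter.Tendsto (fun k => A (xk k)) Filter.atTop (nhds y) →
        ∃ hx : x ∈ D, A ⟨x, hx⟩ = y) ∧
      (¬ ∃ C : ℝ, 0 ≤ C ∧ ∀ x : D, ‖A x‖ ≤ C * ‖(x : H)‖) ∧
      (∀ lam : ℂ, lam ∉ K ↔
        ∃ (R : H →L[ℂ] H) (hR : ∀ y : H, R y ∈ D),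
          (∀ y : H, A ⟨R y, hR y⟩ - lam • R y = y) ∧
          (∀ x : D, R (A x - lam • (x : H)) = x)) := by
  let e := LinearEquiv.ofInjective (S : H →ₗ[ℂ] H) hinj
  let D : Submodule ℂ H := LinearMap.range (S : H →ₗ[ℂ] H)
  let A : D →ₗ[ℂ] H := (e.symm : D →ₗ[ℂ] H) + μ • D.subtype
  have hA : ∀ u (h : S u ∈ D), A ⟨S u, h⟩ = u + μ • S u := by
    intro u h
    have : e.symm ⟨S u, h⟩ = u := by
      rw [LinearEquiv.symm_apply_eq]
      rfl
    simp [A, this]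
  have hmem : ∀ u, S u ∈ D := fun u => ⟨u, rfl⟩
  refine ⟨D, A, ?_, ?_, ?_, ?_⟩
  · exact hd
  · intro xk x y hx hy
    have hu : ∀ k, ∃ u, S u = (xk k : H) := fun k => (xk k).2
    choose u hu using hu
    have hAk : ∀ k, A (xk k) = u k + μ • (xk k : H) := by
      intro k
      have h1 : xk k = ⟨S (u k), hmem _⟩ := Subtype.ext (hu k).symm
      rw [h1, hA]
    have hul : Filter.Tendsto u Filter.atTop (nhds (y - μ • x)) := by
      have := hy.sub (hx.const_smul μ)
      refine this.congr fun k => ?_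
      rw [hAk]
      simp
    have hSu := (S.continuous.tendsto _).comp hul
    have hxe : S (y - μ • x) = x := by
      refine tendsto_nhds_unique hSu (hx.congr fun k => ?_)
      simp [hu]
    refine ⟨hxe ▸ hmem _, ?_⟩
    have h1 : (⟨x, hxe ▸ hmem _⟩ : D) = ⟨S (y - μ • x), hmem _⟩ := Subtype.ext hxe.symm
    rw [h1, hA, hxe]
    simp
  · rintro ⟨C, -, hC⟩
    refine hb ⟨C + ‖μ‖, fun u => ?_⟩
    have h := hC ⟨S u, hmem u⟩
    rw [hA] at h
    have h2 : ‖u‖ ≤ ‖u + μ • S u‖ + ‖μ • S u‖ := by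
      simpa using norm_sub_le (u + μ • S u) (μ • S u)
    rw [norm_smul] at h2
    simp only at h
    linarith
  · intro lam
    rw [hS]
    constructor
    · intro hU
      obtain ⟨U, hU⟩ := hU
      let T : H →L[ℂ] H := ((U⁻¹ : (H →L[ℂ] H)ˣ) : H →L[ℂ] H)
      have h1 : ∀ y, T y - (lam - μ) • S (T y) = y := by
        intro y
        have h := congrArg (fun f : H →L[ℂ] H => f y) U.mul_inv
        rw [hU] at h
        simpa using h
      have h2 : ∀ u, T (u - (lam - μ) • S u) = u := by
        intro y
        have h := congrArg (fun f : H →L[ℂ] H => f y) U.inv_mul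
        rw [hU] at h
        simpa using h
      refine ⟨S * T, fun y => hmem (T y), ?_, ?_⟩
      · intro y
        have h3 := hA (T y) (hmem _)
        have h4 := h1 y
        change A ⟨S (T y), hmem _⟩ - lam • S (T y) = y
        rw [h3]
        rw [sub_smul] at h4
        rw [← sub_eq_zero] at h4 ⊢
        rw [← h4]
        abel
      · rintro ⟨x, u, rfl⟩
        change S (T (A ⟨S u, hmem _⟩ - lam • S u)) = S u
        rw [hA]
        congr 1
        conv_rhs => rw [← h2 u]
        congr 1
        rw [sub_smul]
        abel
    · rintro ⟨R, hR, h1, h2⟩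
      have h3 : ∀ y, ∃ u, S u = R y ∧ y = u - (lam - μ) • S u := by
        intro y
        obtain ⟨u, hu⟩ := hR y
        have hu : S u = R y := hu
        refine ⟨u, hu, ?_⟩
        have h := h1 y
        have h5 : (⟨R y, hR y⟩ : D) = ⟨S u, hmem u⟩ := Subtype.ext hu.symm
        rw [h5, hA, ← hu] at h
        conv_lhs => rw [← h]
        rw [sub_smul]
        abel
      have h4 : ∀ u, R (u - (lam - μ) • S u) = S u := by
        intro u
        have h := h2 ⟨S u, hmem u⟩
        rw [hA] at h
        conv_rhs => rw [← show _ = S u from h]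
        congr 1
        rw [sub_smul]
        abel
      refine isUnit_iff_exists.2 ⟨1 + (lam - μ) • R, ?_, ?_⟩
      · ext y
        obtain ⟨u, hu, hy⟩ := h3 y
        have h5 : (1 + (lam - μ) • R) y = u := by
          change y + (lam - μ) • R y = u
          rw [← hu]
          conv_lhs => rw [hy]
          abel
        change (1 - (lam - μ) • S) ((1 + (lam - μ) • R) y) = y
        rw [h5]
        exact hy.symm
      · ext u
        change (u - (lam - μ) • S u) + (lam - μ) • R (u - (lam - μ) • S u) = u
        rw [h4]
        abel

theorem bdd_inv (K : Set ℂ) (hcpt : IsCompact K) (lam : ℂ) (h : lam ∉ K) :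
    ∃ C : ℝ, 0 ≤ C ∧ ∀ k ∈ K, ‖(k - lam)⁻¹‖ ≤ C := by
  have hc : ContinuousOn (fun k : ℂ => (k - lam)⁻¹) K := by
    refine ContinuousOn.inv₀ (by fun_prop) fun k hk h0 => h ?_
    rwa [← sub_eq_zero.1 h0]
  obtain ⟨C, hC⟩ := hcpt.exists_bound_of_continuousOn hc
  exact ⟨max C 0, le_max_right _ _, fun k hk => (hC k hk).trans (le_max_left _ _)⟩


/-- For every nonempty compact subset `K` of `ℂ` there exist a complex Hilbert space `H`,
a dense subspace `D` of `H`, and an unbounded closed linear operator `A : D → H`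
whose spectrum is exactly `K`. -/
theorem exists_unbounded_closed_operator_with_compact_spectrum
    (K : Set ℂ) (hK : K.Nonempty) (hcpt : IsCompact K) :
    ∃ (H : Type) (_ : NormedAddCommGroup H) (_ : InnerProductSpace ℂ H) (_ : CompleteSpace H)
      (D : Submodule ℂ H) (A : D →ₗ[ℂ] H),
      Dense (D : Set H) ∧
      -- closed graph
      (∀ (xk : ℕ → D) (x y : H),
        Filter.Tendsto (fun k => (xk k : H)) Filter.atTop (nhds x) →
        Filter.Tendsto (fun k => A (xk k)) Filter.atTop (nhds y) →
        ∃ hx : x ∈ D, A ⟨x, hx⟩ = y) ∧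
      -- unbounded
      (¬ ∃ C : ℝ, 0 ≤ C ∧ ∀ x : D, ‖A x‖ ≤ C * ‖(x : H)‖) ∧
      -- the spectrum of A is σ
      (∀ lam : ℂ, lam ∉ K ↔
        ∃ (R : H →L[ℂ] H) (hR : ∀ y : H, R y ∈ D),
          (∀ y : H, A ⟨R y, hR y⟩ - lam • R y = y) ∧
          (∀ x : D, R (A x - lam • (x : H)) = x)) := by
  classical
  obtain ⟨μ, hμ⟩ : ∃ μ, μ ∉ K := by
    by_contra! hh
    exact NormedSpace.noncompactSpace ℂ ℂ |>.noncompact_univ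
      (by rwa [Set.eq_univ_of_forall hh] at hcpt)
  let w : ℤ → ℂ := fun n => (1 / 2 : ℂ) ^ n.natAbs
  have hw : ∀ n, ‖w n‖ ≤ 1 := by
    intro n
    simp only [w, norm_pow]
    exact pow_le_one₀ (norm_nonneg _) (by norm_num)
  have hw0 : ∀ n, w n ≠ 0 := fun n => pow_ne_zero _ (by norm_num)
  let σ : ℕ → K ⊕ ℤ → K ⊕ ℤ := fun m => Sum.map id (fun n => n - m)
  have hσ : ∀ m, Function.Injective (σ m) := fun m =>
    Sum.map_injective.2 ⟨Function.injective_id, fun a b h => by simpa using h⟩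
  obtain ⟨C, hC0, hC⟩ := bdd_inv K hcpt μ hμ
  obtain ⟨Dg, -, hDg⟩ := exists_weighted_comp (σ 1) (hσ 1)
    (Sum.elim (fun k : K => ((k : ℂ) - μ)⁻¹) (fun _ => 0)) C hC0
    (by rintro (k | n) <;> simp [hC0]
        simpa using hC k k.2)
  obtain ⟨V, -, hV⟩ := exists_weighted_comp (σ 1) (hσ 1)
    (Sum.elim (fun k : K => 0) w) 1 zero_le_one
    (by rintro (k | n)
        · simp
        · simpa using hw n)
  have hDl : ∀ x k, Dg x (Sum.inl k) = ((k : ℂ) - μ)⁻¹ * x (Sum.inl k) := fun x k => hDg x _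
  have hDr : ∀ x n, Dg x (Sum.inr n) = 0 := fun x n => by simp [hDg]
  have hVl : ∀ x k, V x (Sum.inl k) = 0 := fun x k => by simp [hV]
  have hVr : ∀ x n, V x (Sum.inr n) = w n * x (Sum.inr (n - 1)) := fun x n => by
    simp [hV, σ]
  -- powers of V
  have hVpr : ∀ m x n, (V ^ m) x (Sum.inr n)
      = (∏ l ∈ Finset.range m, w (n - l)) * x (Sum.inr (n - m)) := by
    intro m
    induction m with
    | zero => intro x n; simp
    | succ m ih =>
      intro x n
      rw [pow_succ]
      change (V ^ m) (V x) (Sum.inr n) = _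
      rw [ih, hVr, Finset.prod_range_succ, mul_assoc]
      congr 4
      push_cast
      ring
  have hVpl : ∀ m x k, (V ^ (m + 1)) x (Sum.inl k) = 0 := by
    intro m x k
    rw [pow_succ']
    exact hVl _ _
  have hVn : ∀ j : ℕ, ‖V ^ (2 * (j + 1))‖ ≤ (1 / 2 : ℝ) ^ ((j + 1) ^ 2) := by
    intro j
    obtain ⟨T, hT, hTx⟩ := exists_weighted_comp (σ (2 * (j + 1))) (hσ _)
      (Sum.elim (fun k : K => 0) (fun n => ∏ l ∈ Finset.range (2 * (j + 1)), w (n - l)))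
      ((1 / 2 : ℝ) ^ ((j + 1) ^ 2)) (by positivity)
      (by rintro (k | n)
          · simp
          · simp only [Sum.elim_inr, w, Finset.prod_pow_eq_pow_sum, norm_pow]
            rw [show ‖(1 / 2 : ℂ)‖ = 1 / 2 by norm_num]
            exact pow_le_pow_of_le_one (by norm_num) (by norm_num) (sum_natAbs_ge _ n))
    have : V ^ (2 * (j + 1)) = T := by
      ext x i
      rcases i with k | n
      · rw [hTx, show 2 * (j + 1) = (2 * j + 1) + 1 by ring, hVpl]
        simp
      · rw [hTx, hVpr]
        simp [σ]
    rw [this]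
    exact hT
  have hVunit : ∀ z : ℂ, IsUnit (1 - z • V) := by
    intro z
    obtain ⟨j, hj⟩ := pow_unbounded_of_one_lt (‖z‖ ^ 2) (one_lt_two)
    refine isUnit_one_sub_of_pow _ (2 * (j + 1)) ?_
    rw [smul_pow]
    rw [norm_smul, norm_pow]
    calc ‖z‖ ^ (2 * (j + 1)) * ‖V ^ (2 * (j + 1))‖
        ≤ ‖z‖ ^ (2 * (j + 1)) * (1 / 2 : ℝ) ^ ((j + 1) ^ 2) := by
          gcongr
          exact hVn j
      _ = (‖z‖ ^ 2 * (1 / 2) ^ (j + 1)) ^ (j + 1) := by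
          rw [mul_pow, ← pow_mul, ← pow_mul, sq (j + 1)]
      _ < 1 := by
          refine pow_lt_one₀ (by positivity) ?_ (by omega)
          rw [one_div, inv_pow, ← div_eq_mul_inv, div_lt_one (by positivity)]
          refine hj.trans_le ?_
          exact pow_le_pow_right₀ (by norm_num) (by omega)
  let S := Dg + V
  have hSl : ∀ x k, S x (Sum.inl k) = ((k : ℂ) - μ)⁻¹ * x (Sum.inl k) := by
    intro x k
    change Dg x (Sum.inl k) + V x (Sum.inl k) = _
    rw [hDl, hVl, add_zero]
  have hSr : ∀ x n, S x (Sum.inr n) = w n * x (Sum.inr (n - 1)) := by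
    intro x k
    change Dg x (Sum.inr k) + V x (Sum.inr k) = _
    rw [hDr, hVr, zero_add]
  have hk0 : ∀ k : K, ((k : ℂ) - μ) ≠ 0 := by
    intro k h0
    exact hμ (sub_eq_zero.1 h0 ▸ k.2)
  have hSsl : ∀ k a, S (lp.single 2 (Sum.inl k) a) = lp.single 2 (Sum.inl k) (((k : ℂ) - μ)⁻¹ * a) := by
    intro k a
    ext i
    rcases i with kk | n
    · rw [hSl, lp.single_apply, lp.single_apply]
      by_cases h : kk = k
      · subst h
        simp
      · have hneb : (Sum.inl kk : K ⊕ ℤ) ≠ Sum.inl k := by simpa using h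
        simp [Pi.single_eq_of_ne hneb]
    · rw [hSr]
      simp
  have hSsr : ∀ n a, S (lp.single 2 (Sum.inr n) a) = lp.single 2 (Sum.inr (n + 1)) (w (n + 1) * a) := by
    intro n a
    ext i
    rcases i with kk | nn
    · rw [hSl]
      simp
    · rw [hSr, lp.single_apply, lp.single_apply]
      by_cases h : nn = n + 1
      · subst h
        simp
      · have hneb : (Sum.inr nn : K ⊕ ℤ) ≠ Sum.inr (n + 1) := by simpa using h
        have hnea : (Sum.inr (nn - 1) : K ⊕ ℤ) ≠ Sum.inr n := by
          intro h3
          have := Sum.inr_injective h3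
          omega
        simp [Pi.single_eq_of_ne hneb, Pi.single_eq_of_ne hnea]
  refine ⟨lp (fun _ : K ⊕ ℤ => ℂ) 2, inferInstance, inferInstance, inferInstance, ?_⟩
  refine abstract_part K _ S ?_ ?_ ?_ μ ?_
  · rw [injective_iff_map_eq_zero]
    intro x hx
    ext i
    rcases i with k | n
    · have h := hSl x k
      rw [hx] at h
      have h := h.symm
      simpa [hk0 k] using h
    · have h := hSr x (n + 1)
      rw [hx] at h
      have h := h.symm
      simpa [hw0] using h
  · have hr : ∀ i a, lp.single 2 i a ∈ LinearMap.range (S : lp (fun _ : K ⊕ ℤ => ℂ) 2 →ₗ[ℂ] lp (fun _ : K ⊕ ℤ => ℂ) 2) := by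
      rintro (k | n) a
      · refine ⟨lp.single 2 (Sum.inl k) (((k : ℂ) - μ) * a), ?_⟩
        refine (hSsl _ _).trans ?_
        rw [inv_mul_cancel_left₀ (hk0 k)]
      · refine ⟨lp.single 2 (Sum.inr (n - 1)) ((w n)⁻¹ * a), ?_⟩
        refine (hSsr _ _).trans ?_
        rw [sub_add_cancel, mul_inv_cancel_left₀ (hw0 n)]
    intro x
    have hx := lp.hasSum_single (by norm_num) x
    refine mem_closure_of_tendsto hx (Filter.Eventually.of_forall fun s => ?_)
    exact Submodule.sum_mem (LinearMap.range (S : lp (fun _ : K ⊕ ℤ => ℂ) 2 →ₗ[ℂ] lp (fun _ : K ⊕ ℤ => ℂ) 2))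
      fun i _ => hr i _
  · rintro ⟨B, hB⟩
    obtain ⟨n, hn⟩ := pow_unbounded_of_one_lt B (one_lt_two)
    have h := hB (lp.single 2 (Sum.inr (n : ℤ)) 1)
    rw [hSsr, lp.norm_single (by norm_num), lp.norm_single (by norm_num)] at h
    have h1 : ‖w ((n : ℤ) + 1) * 1‖ = ((2 : ℝ) ^ (n + 1))⁻¹ := by
      have : ((n : ℤ) + 1).natAbs = n + 1 := by omega
      simp [w, this]
    rw [h1, ← div_eq_mul_inv, le_div_iff₀ (by positivity), norm_one, one_mul, pow_succ] at h
    have : (0 : ℝ) < 2 ^ n := by positivity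
    linarith
  · intro lam
    constructor
    · intro hlam
      have hDV : Dg * V = 0 := by
        ext x i
        change Dg (V x) i = 0
        rcases i with k | n
        · rw [hDl, hVl, mul_zero]
        · rw [hDr]
      have hf : 1 - (lam - μ) • S = (1 - (lam - μ) • Dg) * (1 - (lam - μ) • V) := by
        simp only [S, mul_sub, sub_mul, one_mul, mul_one, smul_mul_smul_comm, hDV, smul_zero,
          smul_add]
        abel
      rw [hf]
      refine IsUnit.mul ?_ (hVunit _)
      obtain ⟨Bd, hBnn, hBle⟩ := bdd_inv K hcpt lam hlam
      obtain ⟨E, -, hE⟩ := exists_weighted_comp (σ 1) (hσ 1)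
        (Sum.elim (fun k : K => ((k : ℂ) - lam)⁻¹) (fun _ => 0)) Bd hBnn
        (by rintro (k | n) <;> simp [hBnn]
            simpa using hBle k k.2)
      have hEl : ∀ x k, E x (Sum.inl k) = ((k : ℂ) - lam)⁻¹ * x (Sum.inl k) := fun x k => hE x _
      have hEr : ∀ x n, E x (Sum.inr n) = 0 := fun x n => by simp [hE]
      have hl0 : ∀ k : K, ((k : ℂ) - lam) ≠ 0 := by
        intro k h0
        exact hlam (sub_eq_zero.1 h0 ▸ k.2)
      have e1 : ∀ x i, (1 - (lam - μ) • Dg) x i = x i - (lam - μ) * Dg x i := fun x i => rfl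
      have e2 : ∀ x i, (1 + (lam - μ) • E) x i = x i + (lam - μ) * E x i := fun x i => rfl
      refine isUnit_iff_exists.2 ⟨1 + (lam - μ) • E, ?_, ?_⟩
      · ext x i
        change (1 - (lam - μ) • Dg) ((1 + (lam - μ) • E) x) i = x i
        rw [e1]
        rcases i with k | n
        · rw [hDl, e2, hEl]
          have := hk0 k
          have := hl0 k
          field_simp
          ring
        · rw [hDr, e2, hEr]
          simp
      · ext x i
        change (1 + (lam - μ) • E) ((1 - (lam - μ) • Dg) x) i = x i
        rw [e2]
        rcases i with k | n
        · rw [hEl, e1, hDl]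
          have := hk0 k
          have := hl0 k
          field_simp
          ring
        · rw [hEr, e1, hDr]
          simp
    · rintro ⟨U, hU⟩ hlam
      have h0 : (1 - (lam - μ) • S) (lp.single 2 (Sum.inl ⟨lam, hlam⟩) 1) = 0 := by
        change lp.single 2 (Sum.inl ⟨lam, hlam⟩) 1
          - (lam - μ) • S (lp.single 2 (Sum.inl ⟨lam, hlam⟩) 1) = 0
        rw [hSsl, ← lp.single_smul, smul_eq_mul, mul_one, mul_inv_cancel₀ (hk0 ⟨lam, hlam⟩),
          sub_self]
      have h := congrArg (fun f : lp (fun _ : K ⊕ ℤ => ℂ) 2 →L[ℂ] lp (fun _ : K ⊕ ℤ => ℂ) 2 =>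
        f (lp.single 2 (Sum.inl ⟨lam, hlam⟩) 1)) U.inv_mul
      rw [hU] at h
      simp only [mul_apply_eq_comp, h0, map_zero, one_apply_eq_self] at h
      have h2 := congrArg norm h
      rw [lp.norm_single (by norm_num)] at h2
      simp at h2
end
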